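/- Let q be a prime power and let A be a nonempty subset of F_q. If q > (2^{|A|} · |A|)^2, then for every integer n with 1 < n < q and (n-1) dividing (q-1), not every element of F_q can be written as the sum of an element of A and an n-potent element, i.e., A + C_n ≠ F_q. -/

import Mathlib

open Polynomial

theorem exists_pow_mul_hasseDeriv_pow {R : Type*} [CommRing R] (f : R[X]) (N t : ℕ) :
    ∃ w : R[X], w.natDegree ≤ t * f.natDegree ∧ f ^ t * hasseDeriv t (f ^ N) = f ^ N * w := by
  induction N generalizing t with
  | zero =>
    rcases Nat.eq_zero_or_pos t with rfl | ht
    · exact ⟨1, by simp⟩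
    · exact ⟨0, by simp, by rw [pow_zero, ← C_1, hasseDeriv_C t _ ht]; simp⟩
  | succ N ih =>
    choose w hw hfw using ih
    refine ⟨∑ p ∈ Finset.HasAntidiagonal.antidiagonal t,
      w p.1 * (if p.2 = 0 then 1 else f ^ (p.2 - 1) * hasseDeriv p.2 f), ?_, ?_⟩
    · refine natDegree_sum_le_of_forall_le _ _ fun p hp => ?_
      rw [Finset.HasAntidiagonal.mem_antidiagonal] at hp
      refine natDegree_mul_le.trans ?_
      rw [← hp, add_mul]
      refine add_le_add (hw _) ?_
      split_ifs with h
      · simp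
      · refine natDegree_mul_le.trans ?_
        have h1 : (f ^ (p.2 - 1)).natDegree ≤ (p.2 - 1) * f.natDegree := natDegree_pow_le
        have h2 : (hasseDeriv p.2 f).natDegree ≤ f.natDegree :=
          (natDegree_hasseDeriv_le f p.2).trans (Nat.sub_le _ _)
        calc _ ≤ (p.2 - 1) * f.natDegree + f.natDegree := add_le_add h1 h2
          _ = (p.2 - 1 + 1) * f.natDegree := by ring
          _ = p.2 * f.natDegree := by rw [Nat.sub_add_cancel (Nat.pos_of_ne_zero h)]
    · rw [pow_succ f N, hasseDeriv_mul, Finset.mul_sum, Finset.mul_sum]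
      refine Finset.sum_congr rfl fun p hp => ?_
      rw [Finset.HasAntidiagonal.mem_antidiagonal] at hp
      calc f ^ t * (hasseDeriv p.1 (f ^ N) * hasseDeriv p.2 f)
          = (f ^ p.1 * hasseDeriv p.1 (f ^ N)) * (f ^ p.2 * hasseDeriv p.2 f) := by
            rw [← hp, pow_add]; ring
        _ = f ^ N * w p.1 * (f ^ p.2 * hasseDeriv p.2 f) := by rw [hfw]
        _ = _ := by
          split_ifs with h
          · rw [h]; simp; ring
          · obtain ⟨s, hs⟩ := Nat.exists_eq_succ_of_ne_zero h
            rw [hs, Nat.succ_eq_add_one, Nat.add_sub_cancel]; ring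

/-- For `l` below the cardinality of the field, `X ^ (j * card K)` behaves like a constant under
the `l`-th Hasse derivative. -/
theorem hasseDeriv_X_pow_card_mul {K : Type*} [Field K] [Fintype K] (j l : ℕ)
    (hl : l < Fintype.card K) (u : K[X]) :
    hasseDeriv l (X ^ (j * Fintype.card K) * u) =
      X ^ (j * Fintype.card K) * hasseDeriv l u := by
  induction j with
  | zero => simp
  | succ j ih =>
    have key : ∀ v : K[X], hasseDeriv l (X ^ Fintype.card K * v) =
        X ^ Fintype.card K * hasseDeriv l v := by
      intro v
      rw [hasseDeriv_mul, Finset.sum_eq_single (0, l)]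
      · simp
      · rintro ⟨a, b⟩ hab hne
        rw [Finset.HasAntidiagonal.mem_antidiagonal] at hab
        have ha : a ≠ 0 := by rintro rfl; simp at hab; simp [hab] at hne
        have : ((Fintype.card K).choose a : K) = 0 := by
          obtain ⟨p, hp⟩ := CharP.exists K
          obtain ⟨n, hpp, hn⟩ := FiniteField.card K p
          rw [CharP.cast_eq_zero_iff K p, hn]
          refine hpp.dvd_choose_pow ha ?_
          rw [← hn]; dsimp at hab; omega
        simp only
        rw [← monomial_one_right_eq_X_pow, hasseDeriv_monomial, this]
        simp
      · simp
    rw [add_mul, one_mul, pow_add, mul_comm (X ^ (j * _)), mul_assoc, key, ih]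
    ring

theorem sum_ne_zero_of_injOn_natTrailingDegree {R ι : Type*} [Semiring R] (s : Finset ι)
    (p : ι → R[X]) (h0 : ∃ i ∈ s, p i ≠ 0)
    (hinj : ∀ i ∈ s, ∀ j ∈ s, p i ≠ 0 → p j ≠ 0 →
      (p i).natTrailingDegree = (p j).natTrailingDegree → i = j) :
    ∑ i ∈ s, p i ≠ 0 := by
  classical
  obtain ⟨i0, hi0, hp0⟩ := h0
  obtain ⟨i, hi, hmin⟩ := (s.filter (p · ≠ 0)).exists_min_image
    (fun i => (p i).natTrailingDegree) ⟨i0, by simp [hi0, hp0]⟩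
  rw [Finset.mem_filter] at hi
  intro h
  have hc := congrArg (fun q => coeff q (p i).natTrailingDegree) h
  simp only [finsetSum_coeff, coeff_zero] at hc
  rw [Finset.sum_eq_single_of_mem i hi.1] at hc
  · exact coeff_natTrailingDegree_ne_zero.2 hi.2 hc
  · intro j hj hji
    by_cases hpj : p j = 0
    · simp [hpj]
    · refine coeff_eq_zero_of_lt_natTrailingDegree (lt_of_le_of_ne (hmin j (by simp [hj, hpj])) ?_)
      exact fun he => hji (hinj i hi.1 j hj hi.2 hpj he).symm

theorem natTrailingDegree_pow' {R : Type*} [CommRing R] [IsDomain R] (f : R[X]) (hf : f ≠ 0)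
    (n : ℕ) : (f ^ n).natTrailingDegree = n * f.natTrailingDegree := by
  induction n with
  | zero => simp
  | succ n ih => rw [pow_succ, natTrailingDegree_mul (pow_ne_zero _ hf) hf, ih]; ring

theorem X_sub_C_pow_dvd_of_hasseDeriv {R : Type*} [CommRing R] (h : R[X]) (x : R) (M : ℕ)
    (H : ∀ l < M, (hasseDeriv l h).eval x = 0) : (X - C x) ^ M ∣ h := by
  rw [X_sub_C_pow_dvd_iff, X_pow_dvd_iff]
  intro d hd
  rw [← taylor_apply, taylor_coeff, H d hd]

theorem card_mul_le_natDegree {R : Type*} [Field R] (h : R[X]) (hh : h ≠ 0) (T : Finset R)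
    (M : ℕ) (H : ∀ x ∈ T, (X - C x) ^ M ∣ h) : T.card * M ≤ h.natDegree := by
  have : ∏ x ∈ T, (X - C x) ^ M ∣ h := by
    refine Finset.prod_dvd_of_coprime ?_ H
    intro x _ y _ hxy
    exact (pairwise_coprime_X_sub_C Function.injective_id hxy).pow
  have h2 := natDegree_le_of_dvd this hh
  rw [natDegree_prod_of_monic _ _ fun x _ => (monic_X_sub_C x).pow M] at h2
  simpa using h2

theorem exists_linearMap_pow_mul_hasseDeriv {R : Type*} [CommRing R] (f : R[X]) (N l : ℕ) :
    ∃ V : R[X] →ₗ[R] R[X], ∀ u, (V u).natDegree ≤ u.natDegree + l * f.natDegree ∧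
      f ^ l * hasseDeriv l (u * f ^ N) = f ^ N * V u := by
  choose w hw hfw using exists_pow_mul_hasseDeriv_pow f N
  refine ⟨∑ p ∈ Finset.HasAntidiagonal.antidiagonal l,
    LinearMap.mulLeft R (f ^ p.1 * w p.2) ∘ₗ hasseDeriv p.1, fun u => ⟨?_, ?_⟩⟩
  · rw [LinearMap.sum_apply]
    refine natDegree_sum_le_of_forall_le _ _ fun p hp => ?_
    rw [Finset.HasAntidiagonal.mem_antidiagonal] at hp
    simp only [LinearMap.comp_apply, LinearMap.mulLeft_apply]
    refine natDegree_mul_le.trans ?_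
    have h1 : (f ^ p.1 * w p.2).natDegree ≤ p.1 * f.natDegree + p.2 * f.natDegree :=
      natDegree_mul_le.trans (add_le_add natDegree_pow_le (hw _))
    have h2 : (hasseDeriv p.1 u).natDegree ≤ u.natDegree :=
      (natDegree_hasseDeriv_le u p.1).trans (Nat.sub_le _ _)
    rw [← add_mul, hp] at h1
    omega
  · rw [LinearMap.sum_apply, hasseDeriv_mul, Finset.mul_sum, Finset.mul_sum]
    refine Finset.sum_congr rfl fun p hp => ?_
    rw [Finset.HasAntidiagonal.mem_antidiagonal] at hp
    simp only [LinearMap.comp_apply, LinearMap.mulLeft_apply]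
    calc f ^ l * (hasseDeriv p.1 u * hasseDeriv p.2 (f ^ N))
        = f ^ p.1 * hasseDeriv p.1 u * (f ^ p.2 * hasseDeriv p.2 (f ^ N)) := by
          rw [← hp, pow_add]; ring
      _ = _ := by rw [hfw]; ring

theorem stepanov_independence {K : Type*} [Field K] (f : K[X]) (hf : f ≠ 0) {Q ℓ m B J : ℕ}
    (hcop : ℓ.Coprime f.natTrailingDegree) (hm : ℓ * m + 1 = Q)
    (hB : ℓ * B + ℓ * f.natTrailingDegree ≤ Q)
    (r : Fin ℓ × Fin J → degreeLT K B) (hr : r ≠ 0) :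
    ∑ ij : Fin ℓ × Fin J, X ^ ((ij.2 : ℕ) * Q) * ((r ij : K[X]) * f ^ (m * (ij.1 : ℕ))) ≠ 0 := by
  have hne : ∀ ij, (X ^ ((ij.2 : ℕ) * Q) * ((r ij : K[X]) * f ^ (m * (ij.1 : ℕ))) ≠ 0 ↔
      (r ij : K[X]) ≠ 0) := by
    intro ij
    simp [hf, X_ne_zero]
  apply sum_ne_zero_of_injOn_natTrailingDegree
  · by_contra! hall
    apply hr
    funext ij
    have := hall ij (Finset.mem_univ _)
    by_contra hc
    exact (hne ij).2 (fun h => hc (Subtype.ext h)) this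
  · rintro ⟨i, j⟩ _ ⟨i', j'⟩ _ h h' heq
    have hv : ∀ i j, (r (i, j) : K[X]) ≠ 0 →
        (X ^ ((j : ℕ) * Q) * ((r (i, j) : K[X]) * f ^ (m * (i : ℕ)))).natTrailingDegree =
          (r (i, j) : K[X]).natTrailingDegree + (j : ℕ) * Q + m * i * f.natTrailingDegree ∧
          (r (i, j) : K[X]).natTrailingDegree < B := by
      intro i j hij
      constructor
      · rw [mul_comm (X ^ _), natTrailingDegree_mul_X_pow (mul_ne_zero hij (pow_ne_zero _ hf)),
          natTrailingDegree_mul hij (pow_ne_zero _ hf), natTrailingDegree_pow' f hf]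
        ring
      · refine (natTrailingDegree_le_natDegree _).trans_lt ?_
        exact (natDegree_lt_iff_degree_lt hij).2 (mem_degreeLT.1 (r (i, j)).2)
    rw [hne] at h h'
    obtain ⟨h1, h2⟩ := hv i j h
    obtain ⟨h1', h2'⟩ := hv i' j' h'
    simp only at heq
    rw [h1, h1'] at heq
    generalize (r (i, j) : K[X]).natTrailingDegree = v at *
    generalize (r (i', j') : K[X]).natTrailingDegree = v' at *
    generalize f.natTrailingDegree = e at *
    have hi := i.2
    have hi' := i'.2
    have hz : (Q : ℤ) * (ℓ * ((j : ℕ) - (j' : ℕ) : ℤ) + e * ((i : ℕ) - (i' : ℕ) : ℤ)) =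
        e * ((i : ℕ) - (i' : ℕ) : ℤ) + ℓ * ((v' : ℤ) - v) := by
      have hmz : (ℓ : ℤ) * m = Q - 1 := by rw [← hm]; push_cast; ring
      have hez : (v : ℤ) + (j : ℕ) * Q + m * (i : ℕ) * e =
        v' + (j' : ℕ) * Q + m * (i' : ℕ) * e := by exact_mod_cast heq
      linear_combination (ℓ : ℤ) * hez - (((i : ℕ) : ℤ) - (i' : ℕ)) * e * hmz
    have hBz : (ℓ : ℤ) * B + ℓ * e ≤ Q := by exact_mod_cast hB
    have hl0 : (0 : ℤ) < ℓ := by omega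
    have hQ0 : (0 : ℤ) < Q := by omega
    have hub : |(e : ℤ) * ((i : ℕ) - (i' : ℕ) : ℤ) + ℓ * ((v' : ℤ) - v)| < Q := by
      have a1 : |((i : ℕ) - (i' : ℕ) : ℤ)| ≤ ℓ := by rw [abs_le]; omega
      have a2 : |((v' : ℤ) - v)| ≤ B - 1 := by rw [abs_le]; omega
      calc _ ≤ |(e : ℤ) * ((i : ℕ) - (i' : ℕ) : ℤ)| + |(ℓ : ℤ) * ((v' : ℤ) - v)| := abs_add_le _ _
        _ = e * |((i : ℕ) - (i' : ℕ) : ℤ)| + ℓ * |((v' : ℤ) - v)| := by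
          rw [abs_mul, abs_mul, abs_of_nonneg (Int.natCast_nonneg e),
            abs_of_nonneg (Int.natCast_nonneg ℓ)]
        _ ≤ e * ℓ + ℓ * (B - 1) := by gcongr
        _ < Q := by nlinarith
    have hzero := Int.eq_zero_of_abs_lt_dvd (Dvd.intro _ hz) hub
    have hlin : (ℓ : ℤ) * ((j : ℕ) - (j' : ℕ) : ℤ) + e * ((i : ℕ) - (i' : ℕ) : ℤ) = 0 := by
      rw [hzero] at hz
      exact (mul_eq_zero.1 hz).resolve_left hQ0.ne'
    have hdvd : (ℓ : ℤ) ∣ ((i : ℕ) - (i' : ℕ) : ℤ) := by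
      refine IsCoprime.dvd_of_dvd_mul_left (Nat.isCoprime_iff_coprime.2 hcop)
        ⟨-((j : ℕ) - (j' : ℕ) : ℤ), ?_⟩
      linear_combination hlin
    have hii : ((i : ℕ) - (i' : ℕ) : ℤ) = 0 :=
      Int.eq_zero_of_abs_lt_dvd hdvd (by rw [abs_lt]; omega)
    rw [hii] at hlin
    have hjj : ((j : ℕ) - (j' : ℕ) : ℤ) = 0 :=
      (mul_eq_zero.1 (by simpa using hlin)).resolve_left hl0.ne'
    ext
    · simp; omega
    · simp; omega

theorem stepanov_card_mul_le {K : Type*} [Field K] [Fintype K] (f : K[X]) (hf : f ≠ 0)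
    {ℓ m B J M : ℕ} (hcop : ℓ.Coprime f.natTrailingDegree) (hm : ℓ * m + 1 = Fintype.card K)
    (hB : ℓ * B + ℓ * f.natTrailingDegree ≤ Fintype.card K) (hM : M ≤ Fintype.card K)
    (hcond : M * (B + M * f.natDegree + J) < ℓ * J * B)
    (ω : K) (T : Finset K) (hT : ∀ x ∈ T, f.eval x ≠ 0 ∧ f.eval x ^ m = ω) :
    T.card * M ≤ B + J * Fintype.card K + f.natDegree * Fintype.card K := by
  set Q := Fintype.card K with hQ
  choose V hV using fun (i l : ℕ) => exists_linearMap_pow_mul_hasseDeriv f (m * i) l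
  set R := B + M * f.natDegree + J with hR
  let P : ℕ → (Fin ℓ × Fin J → degreeLT K B) →ₗ[K] K[X] := fun l =>
    ∑ ij : Fin ℓ × Fin J, LinearMap.mulLeft K (C (ω ^ (ij.1 : ℕ)) * X ^ (ij.2 : ℕ)) ∘ₗ
      V ij.1 l ∘ₗ (degreeLT K B).subtype ∘ₗ LinearMap.proj ij
  have hP : ∀ l r, P l r = ∑ ij : Fin ℓ × Fin J,
      C (ω ^ (ij.1 : ℕ)) * X ^ (ij.2 : ℕ) * V ij.1 l (r ij) := by
    intro l r
    simp [P, LinearMap.sum_apply, mul_assoc]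
  have hPdeg : ∀ l < M, ∀ r, ∀ n, R ≤ n → (P l r).coeff n = 0 := by
    intro l hl r n hn
    rw [hP, finsetSum_coeff]
    refine Finset.sum_eq_zero fun ij _ => ?_
    by_cases h0 : (r ij : K[X]) = 0
    · simp [h0]
    refine coeff_eq_zero_of_natDegree_lt (lt_of_lt_of_le ?_ hn)
    have h1 : (r ij : K[X]).natDegree < B :=
      (natDegree_lt_iff_degree_lt h0).2 (mem_degreeLT.1 (r ij).2)
    have h2 := (hV ij.1 l (r ij)).1
    have h3 : (C (ω ^ (ij.1 : ℕ)) * X ^ (ij.2 : ℕ) : K[X]).natDegree ≤ ij.2 :=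
      natDegree_C_mul_X_pow_le _ _
    have h4 := ij.2.2
    have h5 : l * f.natDegree ≤ M * f.natDegree := Nat.mul_le_mul_right _ hl.le
    refine natDegree_mul_le.trans_lt ?_
    omega
  let Φ : (Fin ℓ × Fin J → degreeLT K B) →ₗ[K] (Fin M × Fin R → K) :=
    LinearMap.pi fun ln => lcoeff K (ln.2 : ℕ) ∘ₗ P ln.1
  have hfin : Module.finrank K (Fin M × Fin R → K) <
      Module.finrank K (Fin ℓ × Fin J → degreeLT K B) := by
    rw [Module.finrank_pi, Module.finrank_pi_fintype]
    have : Module.finrank K (degreeLT K B) = B := by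
      rw [(degreeLTEquiv K B).finrank_eq]; simp
    simp only [this]
    simpa using hcond
  have : Module.Finite K (degreeLT K B) := Module.Finite.equiv (degreeLTEquiv K B).symm
  obtain ⟨r, hr, hr0⟩ := (Submodule.ne_bot_iff _).1 (Φ.ker_ne_bot_of_finrank_lt hfin)
  have hPr : ∀ l < M, P l r = 0 := by
    intro l hl
    ext n
    rcases lt_or_ge n R with hn | hn
    · exact congrFun (LinearMap.mem_ker.1 hr) (⟨l, hl⟩, ⟨n, hn⟩)
    · rw [hPdeg l hl r n hn, coeff_zero]
  have hne := stepanov_independence f hf hcop hm hB r hr0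
  set h := ∑ ij : Fin ℓ × Fin J,
    X ^ ((ij.2 : ℕ) * Q) * ((r ij : K[X]) * f ^ (m * (ij.1 : ℕ))) with hh
  refine (card_mul_le_natDegree h hne T M fun x hx => ?_).trans ?_
  · obtain ⟨hx0, hxω⟩ := hT x hx
    refine X_sub_C_pow_dvd_of_hasseDeriv h x M fun l hl => ?_
    refine (mul_eq_zero.1 ?_).resolve_left (pow_ne_zero l hx0)
    rw [← eval_pow, ← eval_mul, hh, map_sum, Finset.mul_sum, eval_finsetSum]
    have := congrArg (eval x) (hPr l hl)
    rw [hP, eval_finsetSum, eval_zero] at this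
    rw [← this]
    refine Finset.sum_congr rfl fun ij _ => ?_
    rw [hasseDeriv_X_pow_card_mul _ _ (lt_of_lt_of_le hl hM), mul_left_comm, (hV _ _ _).2]
    simp only [eval_mul, eval_pow, eval_X, eval_C]
    rw [pow_mul (eval x f), hxω, mul_comm _ (Fintype.card K), pow_mul, FiniteField.pow_card]
    ring
  · refine natDegree_sum_le_of_forall_le _ _ fun ij _ => ?_
    by_cases h0 : (r ij : K[X]) = 0
    · simp [h0]
    have h1 : (r ij : K[X]).natDegree < B :=
      (natDegree_lt_iff_degree_lt h0).2 (mem_degreeLT.1 (r ij).2)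
    have h2 : (f ^ (m * (ij.1 : ℕ))).natDegree ≤ Q * f.natDegree := by
      refine natDegree_pow_le.trans (Nat.mul_le_mul_right _ ?_)
      have := ij.1.2
      nlinarith
    have h3 : ((ij.2 : ℕ) * Q) ≤ J * Q := Nat.mul_le_mul_right _ ij.2.2.le
    refine natDegree_mul_le.trans ?_
    rw [natDegree_X_pow]
    have := natDegree_mul_le (p := (r ij : K[X])) (q := f ^ (m * (ij.1 : ℕ)))
    rw [mul_comm Q] at h2
    omega

theorem stepanov_dimension_count {ℓ B D t v : ℕ} (hℓ : 0 < ℓ) (hv : v = 2 * ℓ * (ℓ * D + 1))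
    (hm : ℓ * (B + D) + 1 = (t + v) ^ 2) (htv : v ≤ t) :
    ℓ * t * (B + ℓ * t * D + (t + v)) < ℓ * (t + v) * B := by
  have hℓD : ℓ * D + 1 ≤ v := by rw [hv]; nlinarith
  have h1 : t * (B + ℓ * t * D + (t + v)) < (t + v) * B := by
    have hvB : v * B = 2 * (ℓ * D + 1) * (ℓ * B) := by rw [hv]; ring
    have hlB : ℓ * B + (ℓ * D + 1) = (t + v) ^ 2 := by rw [← hm]; ring
    have h4 : (ℓ * D + 1) * (t + v) ^ 2 < v * B := by
      rw [hvB, mul_comm 2, mul_assoc]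
      refine Nat.mul_lt_mul_of_pos_left ?_ (by omega)
      nlinarith
    have h5 : t * (ℓ * t * D + (t + v)) ≤ (ℓ * D + 1) * (t + v) ^ 2 := by
      have h6 : t * (ℓ * t * D) ≤ ℓ * D * (t + v) ^ 2 := by
        calc t * (ℓ * t * D) = ℓ * D * t ^ 2 := by ring
          _ ≤ _ := by gcongr; omega
      have h7 : t * (t + v) ≤ (t + v) ^ 2 := by rw [pow_two]; gcongr; omega
      linarith
    calc t * (B + ℓ * t * D + (t + v)) = t * B + t * (ℓ * t * D + (t + v)) := by ring
      _ < t * B + v * B := by omega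
      _ = _ := by ring
  calc _ = ℓ * (t * (B + ℓ * t * D + (t + v))) := by ring
    _ < ℓ * ((t + v) * B) := Nat.mul_lt_mul_of_pos_left h1 hℓ
    _ = _ := by ring

theorem stepanov_card_le {K : Type*} [Field K] [Fintype K] (f : K[X]) (hf : f ≠ 0)
    {ℓ m s D : ℕ} (hℓ : 0 < ℓ) (hcop : ℓ.Coprime f.natTrailingDegree)
    (hm : ℓ * m + 1 = Fintype.card K)
    (hs : Fintype.card K = s ^ 2) (hD : f.natDegree = D)
    (ω : K) (T : Finset K) (hT : ∀ x ∈ T, f.eval x ≠ 0 ∧ f.eval x ^ m = ω) :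
    ℓ * T.card ≤ s ^ 2 + (4 * ℓ * (ℓ * D + 1) * (ℓ + 1) + 2 * (D + 1)) * s := by
  obtain ⟨v, hv⟩ : ∃ v, v = 2 * ℓ * (ℓ * D + 1) := ⟨_, rfl⟩
  have hC : 4 * ℓ * (ℓ * D + 1) * (ℓ + 1) + 2 * (D + 1) = 2 * v * ℓ + 2 * (v + D + 1) := by
    rw [hv]; ring
  rw [hC]
  have hTQ : T.card ≤ s ^ 2 := hs ▸ T.card_le_univ
  rcases lt_or_ge s (2 * v) with hsv | hsv
  · calc ℓ * T.card ≤ ℓ * (s * s) := by rw [← pow_two]; gcongr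
      _ ≤ ℓ * (2 * v * s) := by gcongr
      _ ≤ _ := by nlinarith
  have hℓD : ℓ * D + 1 ≤ v := by rw [hv]; nlinarith
  have hℓv : ℓ ≤ v := by rw [hv]; nlinarith [Nat.zero_le (ℓ * D)]
  obtain ⟨t, rfl⟩ : ∃ t, s = t + v := ⟨s - v, by omega⟩
  have htv : v ≤ t := by omega
  obtain ⟨B, rfl⟩ : ∃ B, m = B + D := by
    refine ⟨m - D, (Nat.sub_add_cancel ?_).symm⟩
    by_contra! hlt
    have : ℓ * m + 1 ≤ ℓ * D + 1 := by gcongr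
    nlinarith
  rw [hs] at hm
  have he : f.natTrailingDegree ≤ D := hD ▸ natTrailingDegree_le_natDegree f
  have key := stepanov_card_mul_le (B := B) (J := t + v) (M := ℓ * t) f hf hcop (hm.trans hs.symm)
    ?_ ?_ ?_ ω T hT
  · rw [hs, hD] at key
    have hB : B ≤ (t + v) ^ 2 := by nlinarith
    have h1 : (ℓ * T.card) * t ≤ (t + v) ^ 2 * (t + v + D + 1) := by nlinarith
    have h2 : (t + v) ^ 2 * (t + v + D + 1) ≤
        ((t + v) ^ 2 + (2 * v * ℓ + 2 * (v + D + 1)) * (t + v)) * t := by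
      have : (t + v) * (v + D + 1) ≤ 2 * (v + D + 1) * t := by nlinarith
      have h3 : (t + v) * ((t + v) * (v + D + 1)) ≤ (t + v) * (2 * (v + D + 1) * t) := by gcongr
      nlinarith [Nat.zero_le (2 * v * ℓ * (t + v) * t)]
    exact Nat.le_of_mul_le_mul_right (h1.trans h2) (by omega)
  · rw [hs]; nlinarith
  · rw [hs]; nlinarith
  · exact hD ▸ stepanov_dimension_count hℓ hv hm htv

theorem norm_sum_character_le {K : Type*} [Field K] [Fintype K] (ψ : K →* ℂ) (f : K[X])
    (hf : f ≠ 0) {ℓ m s D : ℕ} (hℓ : 1 < ℓ) (hcop : ℓ.Coprime f.natTrailingDegree)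
    (hm : ℓ * m + 1 = Fintype.card K) (hs : Fintype.card K = s ^ 2) (hD : f.natDegree = D)
    (hψ0 : ψ 0 = 0) (hψ : ∀ y ≠ 0, ψ y ^ ℓ = 1) (hψ1 : ∀ y ≠ 0, ψ y = 1 → y ^ m = 1) :
    ‖∑ x, ψ (f.eval x)‖ ≤
      (2 * (4 * ℓ * (ℓ * D + 1) * (ℓ + 1) + 2 * (D + 1)) + D : ℝ) * s := by
  classical
  set E := 4 * ℓ * (ℓ * D + 1) * (ℓ + 1) + 2 * (D + 1) with hE
  set μ := nthRootsFinset ℓ (1 : ℂ) with hμ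
  have hℓ0 : 0 < ℓ := by omega
  have hprim := Complex.isPrimitiveRoot_exp ℓ hℓ0.ne'
  have hμcard : μ.card = ℓ := hprim.card_nthRootsFinset
  have hμsum : ∑ z ∈ μ, z = 0 := by
    set ζ := Complex.exp (2 * Real.pi * Complex.I / ℓ) with hζ
    have hζ1 := hprim.pow_eq_one
    have hζ0 : ζ ≠ 0 := hprim.ne_zero hℓ0.ne'
    have h1 : ζ * ∑ z ∈ μ, z = ∑ z ∈ μ, z := by
      rw [Finset.mul_sum]
      refine Finset.sum_nbij' (ζ * ·) (ζ⁻¹ * ·) ?_ ?_ ?_ ?_ ?_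
      · intro z hz
        rw [hμ, mem_nthRootsFinset hℓ0] at hz ⊢
        rw [mul_pow, hζ1, hz, one_mul]
      · intro z hz
        rw [hμ, mem_nthRootsFinset hℓ0] at hz ⊢
        rw [mul_pow, inv_pow, hζ1, hz, inv_one, one_mul]
      · intro z _; simp [hζ0]
      · intro z _; simp [hζ0]
      · intro z _; rfl
    have h2 : (ζ - 1) * ∑ z ∈ μ, z = 0 := by rw [sub_mul, h1, one_mul, sub_self]
    exact (mul_eq_zero.1 h2).resolve_left (sub_ne_zero.2 (hprim.ne_one hℓ))
  let N : ℂ → Finset K := fun z => Finset.univ.filter fun x => f.eval x ≠ 0 ∧ ψ (f.eval x) = z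
  have hmap : ∀ x ∈ Finset.univ.filter (fun x => f.eval x ≠ 0), ψ (f.eval x) ∈ μ := by
    intro x hx
    rw [hμ, mem_nthRootsFinset hℓ0]
    exact hψ _ (Finset.mem_filter.1 hx).2
  have hNz : ∀ z, Finset.filter (fun x => ψ (f.eval x) = z)
      (Finset.univ.filter fun x => f.eval x ≠ 0) = N z := by
    intro z; rw [Finset.filter_filter]
  have hsum : ∑ x, ψ (f.eval x) = ∑ z ∈ μ, z * ((N z).card : ℂ) := by
    rw [← Finset.sum_filter_of_ne (p := fun x => f.eval x ≠ 0)
      (fun x _ h h0 => h (by rw [h0, hψ0])), ← Finset.sum_fiberwise_of_maps_to hmap]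
    refine Finset.sum_congr rfl fun z _ => ?_
    rw [hNz, Finset.sum_congr rfl (g := fun _ => z) (fun x hx => (Finset.mem_filter.1 hx).2.2),
      Finset.sum_const, nsmul_eq_mul, mul_comm]
  have hNcard : (s : ℝ) ^ 2 ≤ ∑ z ∈ μ, ((N z).card : ℝ) + D := by
    have h1 : (Finset.univ.filter fun x => f.eval x ≠ 0).card = ∑ z ∈ μ, (N z).card := by
      rw [Finset.card_eq_sum_card_fiberwise hmap]
      exact Finset.sum_congr rfl fun z _ => by rw [hNz]
    have h2 : (Finset.univ.filter fun x => ¬ (f.eval x ≠ 0)).card ≤ D := by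
      rw [← hD]
      refine (Finset.card_le_card (t := f.roots.toFinset) fun x hx => ?_).trans
        ((Multiset.toFinset_card_le _).trans (card_roots' f))
      simpa [hf] using hx
    have h3 := Finset.card_filter_add_card_filter_not (s := (Finset.univ : Finset K))
      (fun x => f.eval x ≠ 0)
    rw [Finset.card_univ, hs, h1] at h3
    have : s ^ 2 ≤ ∑ z ∈ μ, (N z).card + D := by omega
    exact_mod_cast this
  have hNle : ∀ z, ((ℓ * (N z).card : ℕ) : ℝ) ≤ s ^ 2 + E * s := by
    intro z
    rcases (N z).eq_empty_or_nonempty with h | ⟨x0, hx0⟩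
    · rw [h]; simp; positivity
    have hx0' := (Finset.mem_filter.1 hx0).2
    have := stepanov_card_le f hf hℓ0 hcop hm hs hD (f.eval x0 ^ m) (N z) ?_
    · exact_mod_cast this
    · intro x hx
      have hx' := (Finset.mem_filter.1 hx).2
      refine ⟨hx'.1, ?_⟩
      have h1 : ψ (f.eval x / f.eval x0) = 1 := by
        have h2 : ψ (f.eval x / f.eval x0) * ψ (f.eval x0) = ψ (f.eval x0) := by
          rw [← map_mul, div_mul_cancel₀ _ hx0'.1, hx'.2, hx0'.2]
        have h3 : ψ (f.eval x0) ≠ 0 := by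
          intro h; have := hψ _ hx0'.1; rw [h, zero_pow hℓ0.ne'] at this; simp at this
        exact mul_right_cancel₀ h3 (h2.trans (one_mul _).symm)
      have h4 := hψ1 _ (div_ne_zero hx'.1 hx0'.1) h1
      rw [div_pow, div_eq_one_iff_eq (pow_ne_zero _ hx0'.1)] at h4
      exact h4
  have hdiff : (ℓ : ℂ) * ∑ x, ψ (f.eval x) =
      ∑ z ∈ μ, z * (((ℓ * (N z).card : ℝ) - s ^ 2 : ℝ) : ℂ) := by
    push_cast
    simp only [mul_sub, Finset.sum_sub_distrib]
    rw [← Finset.sum_mul, hμsum, zero_mul, sub_zero, hsum, Finset.mul_sum]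
    exact Finset.sum_congr rfl fun z _ => by ring
  have hbound : ℓ * ‖∑ x, ψ (f.eval x)‖ ≤ ℓ * ((2 * E + D) * s) := by
    calc ℓ * ‖∑ x, ψ (f.eval x)‖ = ‖(ℓ : ℂ) * ∑ x, ψ (f.eval x)‖ := by simp
      _ ≤ ∑ z ∈ μ, |((ℓ * (N z).card : ℝ) - s ^ 2)| := by
        rw [hdiff]
        refine (norm_sum_le _ _).trans (Finset.sum_le_sum fun z hz => ?_)
        rw [norm_mul, Complex.norm_real, Real.norm_eq_abs]
        rw [hμ, mem_nthRootsFinset hℓ0] at hz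
        rw [Complex.norm_eq_one_of_pow_eq_one hz hℓ0.ne', one_mul]
      _ ≤ ∑ z ∈ μ, (2 * (E * s) - ((ℓ * (N z).card : ℝ) - s ^ 2)) := by
        refine Finset.sum_le_sum fun z _ => ?_
        have h1 := hNle z
        push_cast at h1
        have h2 : (0 : ℝ) ≤ E * s := by positivity
        rw [abs_le]; constructor <;> linarith
      _ = ℓ * (2 * (E * s) + s ^ 2 - ∑ z ∈ μ, ((N z).card : ℝ)) := by
        rw [Finset.sum_sub_distrib, Finset.sum_sub_distrib, Finset.sum_const, Finset.sum_const,
          hμcard, ← Finset.mul_sum]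
        simp only [nsmul_eq_mul]; ring
      _ ≤ ℓ * ((2 * E + D) * s) := by
        have hs1 : (1 : ℝ) ≤ s := by
          have : s ≠ 0 := by rintro rfl; simp at hs
          exact_mod_cast Nat.one_le_iff_ne_zero.2 this
        gcongr
        have : (D : ℝ) ≤ D * s := le_mul_of_one_le_right (by positivity) hs1
        linarith
  have := le_of_mul_le_mul_left hbound (by exact_mod_cast hℓ0)
  rw [hE] at this
  push_cast at this
  exact this

section MonicPolynomials

variable (F : Type*) [Field F] [Finite F]

theorem finite_monic_natDegree_le (n : ℕ) : {h : F[X] | h.Monic ∧ h.natDegree ≤ n}.Finite := by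
  have : Module.Finite F (degreeLT F (n + 1)) := Module.Finite.equiv (degreeLTEquiv F (n + 1)).symm
  have : Finite (degreeLT F (n + 1)) := Module.finite_of_finite F
  refine (Set.toFinite (degreeLT F (n + 1) : Set F[X])).subset fun h hh => ?_
  rw [SetLike.mem_coe, mem_degreeLT, degree_eq_natDegree hh.1.ne_zero]
  exact_mod_cast Nat.lt_succ_of_le hh.2

/-- The monic polynomials of degree `n`. -/
noncomputable def monicFinset (n : ℕ) : Finset F[X] :=
  Set.Finite.toFinset (s := {h : F[X] | h.Monic ∧ h.natDegree = n})
    ((finite_monic_natDegree_le F n).subset fun _ h => ⟨h.1, h.2.le⟩)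

/-- The monic irreducible polynomials of degree at most `n`. -/
noncomputable def monicIrreducibleFinset (n : ℕ) : Finset F[X] :=
  Set.Finite.toFinset (s := {h : F[X] | (h.Monic ∧ h.natDegree ≤ n) ∧ Irreducible h})
    ((finite_monic_natDegree_le F n).subset fun _ h => h.1)

variable {F}

theorem mem_monicFinset {n : ℕ} {h : F[X]} :
    h ∈ monicFinset F n ↔ h.Monic ∧ h.natDegree = n := by
  simp [monicFinset]

theorem mem_monicIrreducibleFinset {n : ℕ} {h : F[X]} :
    h ∈ monicIrreducibleFinset F n ↔ (h.Monic ∧ h.natDegree ≤ n) ∧ Irreducible h := by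
  simp [monicIrreducibleFinset]

open Classical UniqueFactorizationMonoid in
theorem sum_natDegree_of_pow_dvd {n : ℕ} {h : F[X]} (hh : h ∈ monicFinset F n) :
    ∑ P ∈ monicIrreducibleFinset F n, ∑ j ∈ Finset.Icc 1 n,
      (if P ^ j ∣ h then P.natDegree else 0) = n := by
  obtain ⟨hm, hdeg⟩ := mem_monicFinset.1 hh
  have hcount : ∀ P ∈ monicIrreducibleFinset F n, ∑ j ∈ Finset.Icc 1 n,
      (if P ^ j ∣ h then P.natDegree else 0) =
        (normalizedFactors h).count P * P.natDegree := by
    intro P hP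
    obtain ⟨⟨hPm, hPdeg⟩, hPi⟩ := mem_monicIrreducibleFinset.1 hP
    have hiff : ∀ j, P ^ j ∣ h ↔ j ≤ (normalizedFactors h).count P := by
      intro j
      rw [pow_dvd_iff_le_emultiplicity,
        emultiplicity_eq_count_normalizedFactors hPi hm.ne_zero, hPm.normalize_eq_self]
      exact_mod_cast Iff.rfl
    have hle : (normalizedFactors h).count P ≤ n := by
      have h1 := natDegree_le_of_dvd ((hiff _).2 le_rfl) hm.ne_zero
      rw [natDegree_pow, hdeg] at h1
      have := hPi.natDegree_pos
      nlinarith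
    rw [← Finset.sum_filter, Finset.sum_const, smul_eq_mul]
    congr 1
    rw [show (Finset.Icc 1 n).filter (fun j => P ^ j ∣ h) =
      Finset.Icc 1 ((normalizedFactors h).count P) from ?_, Nat.card_Icc, Nat.add_sub_cancel]
    ext j
    simp only [Finset.mem_filter, Finset.mem_Icc, hiff]
    omega
  rw [Finset.sum_congr rfl hcount]
  have hprod : (normalizedFactors h).prod = h := by
    rw [prod_normalizedFactors_eq hm.ne_zero, hm.normalize_eq_self]
  have hsub : (normalizedFactors h).toFinset ⊆ monicIrreducibleFinset F n := by
    intro P hP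
    rw [Multiset.mem_toFinset] at hP
    have hPi := irreducible_of_normalized_factor P hP
    refine mem_monicIrreducibleFinset.2 ⟨⟨?_, ?_⟩, hPi⟩
    · rw [← normalize_normalized_factor P hP]
      exact monic_normalize hPi.ne_zero
    · exact hdeg ▸ natDegree_le_of_dvd (dvd_of_mem_normalizedFactors hP) hm.ne_zero
  rw [← Finset.sum_subset hsub fun P _ hP => ?_]
  · rw [← hdeg]
    conv_rhs => rw [← hprod, natDegree_multiset_prod _ (zero_notMem_normalizedFactors h),
      Finset.sum_multiset_map_count]
    simp
  · rw [Multiset.mem_toFinset] at hP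
    rw [Multiset.count_eq_zero_of_notMem hP, zero_mul]

open Classical in
theorem sum_filter_dvd_monicFinset (Λ : F[X] →* ℂ) {n d : ℕ} {G : F[X]} (hG : G ∈ monicFinset F d)
    (hd : d ≤ n) :
    ∑ h ∈ (monicFinset F n).filter (G ∣ ·), Λ h = Λ G * ∑ h ∈ monicFinset F (n - d), Λ h := by
  obtain ⟨hGm, hGd⟩ := mem_monicFinset.1 hG
  rw [Finset.mul_sum]
  symm
  refine Finset.sum_bij (fun h _ => G * h) ?_ ?_ ?_ ?_
  · intro h hh
    rw [mem_monicFinset] at hh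
    rw [Finset.mem_filter, mem_monicFinset]
    refine ⟨⟨hGm.mul hh.1, ?_⟩, dvd_mul_right _ _⟩
    rw [hGm.natDegree_mul hh.1, hGd, hh.2]; omega
  · intro a _ b _ hab
    exact mul_left_cancel₀ hGm.ne_zero hab
  · intro h hh
    rw [Finset.mem_filter, mem_monicFinset] at hh
    obtain ⟨⟨hhm, hhd⟩, g, rfl⟩ := hh
    have hg : g.Monic := hGm.of_mul_monic_left hhm
    refine ⟨g, mem_monicFinset.2 ⟨hg, ?_⟩, rfl⟩
    rw [hGm.natDegree_mul hg] at hhd; omega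
  · intro h _
    rw [map_mul]

/-- The coefficient identity expressing that the logarithmic derivative of an Euler product over
monic irreducible polynomials is a sum over prime powers. -/
theorem nat_mul_sum_monicFinset (Λ : F[X] →* ℂ) (n : ℕ) (S : ℕ → ℂ)
    (hS : ∀ r ∈ Finset.Icc 1 n, S r =
      ∑ p ∈ (monicIrreducibleFinset F n ×ˢ Finset.Icc 1 n).filter
        (fun p => p.2 * p.1.natDegree = r), (p.1.natDegree : ℂ) * Λ p.1 ^ p.2) :
    n * ∑ h ∈ monicFinset F n, Λ h =
      ∑ r ∈ Finset.Icc 1 n, S r * ∑ h ∈ monicFinset F (n - r), Λ h := by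
  classical
  have h1 : n * ∑ h ∈ monicFinset F n, Λ h =
      ∑ p ∈ monicIrreducibleFinset F n ×ˢ Finset.Icc 1 n,
        (p.1.natDegree : ℂ) * ∑ h ∈ (monicFinset F n).filter (p.1 ^ p.2 ∣ ·), Λ h := by
    rw [Finset.mul_sum]
    simp only [Finset.sum_filter, Finset.mul_sum]
    rw [Finset.sum_comm]
    refine Finset.sum_congr rfl fun h hh => ?_
    have := congrArg (Nat.cast (R := ℂ)) (sum_natDegree_of_pow_dvd hh)
    push_cast at this
    rw [← this, Finset.sum_product, Finset.sum_mul]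
    refine Finset.sum_congr rfl fun P _ => ?_
    rw [Finset.sum_mul]
    refine Finset.sum_congr rfl fun j _ => ?_
    split_ifs <;> simp
  have h2 : ∀ p ∈ monicIrreducibleFinset F n ×ˢ Finset.Icc 1 n,
      (p.1.natDegree : ℂ) * ∑ h ∈ (monicFinset F n).filter (p.1 ^ p.2 ∣ ·), Λ h ≠ 0 →
      p.2 * p.1.natDegree ≤ n := by
    intro p hp h0
    by_contra! hlt
    apply h0
    rw [Finset.filter_false_of_mem, Finset.sum_empty, mul_zero]
    intro h hh hdvd
    rw [mem_monicFinset] at hh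
    have := natDegree_le_of_dvd hdvd hh.1.ne_zero
    rw [natDegree_pow, hh.2] at this
    omega
  rw [h1, ← Finset.sum_filter_of_ne h2, ← Finset.sum_fiberwise_of_maps_to (t := Finset.Icc 1 n)
    (g := fun p => p.2 * p.1.natDegree)]
  · refine Finset.sum_congr rfl fun r hr => ?_
    rw [hS r hr, Finset.sum_mul, Finset.filter_filter]
    rw [Finset.mem_Icc] at hr
    refine Finset.sum_congr ?_ fun p hp => ?_
    · refine Finset.filter_congr fun p _ => ?_
      omega
    · rw [Finset.mem_filter, Finset.mem_product, mem_monicIrreducibleFinset] at hp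
      have hmem : p.1 ^ p.2 ∈ monicFinset F r :=
        mem_monicFinset.2 ⟨hp.1.1.1.1.pow _, by rw [natDegree_pow, hp.2]⟩
      rw [sum_filter_dvd_monicFinset Λ hmem hr.2, map_pow, mul_assoc]
  · intro p hp
    rw [Finset.mem_filter, Finset.mem_product, mem_monicIrreducibleFinset, Finset.mem_Icc] at hp
    rw [Finset.mem_Icc]
    have := hp.1.1.2.natDegree_pos
    exact ⟨by nlinarith, hp.2⟩

end MonicPolynomials

section Extensions

variable {F K : Type*} [Field F] [Field K] [Algebra F K] [Finite K]

open IntermediateField in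
theorem norm_eq_coeff_zero_minpoly_pow (z : K) :
    Algebra.norm F z = ((-1) ^ (minpoly F z).natDegree * (minpoly F z).coeff 0) ^
      (Module.finrank F K / (minpoly F z).natDegree) := by
  have hfin : Module.Finite F K := .of_finite
  have hz : IsIntegral F z := .of_finite F z
  have hgen := Algebra.PowerBasis.norm_gen_eq_coeff_zero_minpoly (adjoin.powerBasis hz)
  rw [adjoin.powerBasis_gen, minpoly_gen, adjoin.powerBasis_dim] at hgen
  rw [Algebra.norm_eq_norm_adjoin, hgen]
  congr 1
  rw [← adjoin.finrank hz, ← Module.finrank_mul_finrank F F⟮z⟯ K,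
    Nat.mul_div_cancel_left _ Module.finrank_pos]

theorem norm_algebraMap_sub (x : K) (a : F) :
    Algebra.norm F (algebraMap F K a - x) =
      ((minpoly F x).eval a) ^ (Module.finrank F K / (minpoly F x).natDegree) := by
  have hfin : Module.Finite F K := .of_finite
  have hx : IsIntegral F x := .of_finite F x
  have h1 : algebraMap F K a - x = algebraMap F K (-1) * (x - algebraMap F K a) := by simp
  have hdeg : (minpoly F (x - algebraMap F K a)).natDegree = (minpoly F x).natDegree := by
    rw [minpoly.sub_algebraMap, natDegree_comp, natDegree_X_add_C, mul_one]
  have hcoeff : (minpoly F (x - algebraMap F K a)).coeff 0 = (minpoly F x).eval a := by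
    rw [minpoly.sub_algebraMap, coeff_zero_eq_eval_zero]; simp
  rw [h1, map_mul, Algebra.norm_algebraMap, norm_eq_coeff_zero_minpoly_pow, hdeg, hcoeff,
    mul_pow, ← mul_assoc, ← pow_mul, Nat.mul_div_cancel' (minpoly.degree_dvd hx), ← mul_pow]
  simp

theorem card_filter_minpoly_eq [Fintype K] [DecidableEq F[X]] {P : F[X]} (hP : P.Monic)
    (hPi : Irreducible P) (hdvd : P.natDegree ∣ Module.finrank F K) :
    (Finset.univ.filter fun x : K => minpoly F x = P).card = P.natDegree := by
  classical
  have := Fact.mk hPi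
  have hfr : Module.finrank F (AdjoinRoot P) = P.natDegree := by
    rw [(AdjoinRoot.powerBasis hPi.ne_zero).finrank, AdjoinRoot.powerBasis_dim]
  have h := FiniteField.natCard_algHom_of_finrank_dvd (F := F) (K := AdjoinRoot P) (L := K)
    (by rwa [hfr])
  rw [hfr, Nat.card_congr (AdjoinRoot.equiv K F P hPi.ne_zero)] at h
  rw [← h, eq_comm]
  refine Nat.subtype_card _ fun x => ?_
  rw [Finset.mem_filter, mem_aroots, and_iff_right (Finset.mem_univ x),
    and_iff_right hPi.ne_zero]
  constructor
  · rintro rfl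
    exact minpoly.aeval F x
  · intro hx
    exact (minpoly.eq_of_irreducible_of_monic hPi hx hP).symm

theorem sum_minpoly_pow [Fintype K] [Finite F] (Λ : F[X] →* ℂ) {n : ℕ}
    (hn : Module.finrank F K ≤ n) :
    ∑ x : K, Λ (minpoly F x) ^ (Module.finrank F K / (minpoly F x).natDegree) =
      ∑ p ∈ (monicIrreducibleFinset F n ×ˢ Finset.Icc 1 n).filter
        (fun p => p.2 * p.1.natDegree = Module.finrank F K),
        (p.1.natDegree : ℂ) * Λ p.1 ^ p.2 := by
  classical
  have hfin : Module.Finite F K := .of_finite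
  set r := Module.finrank F K with hr
  have hr0 : 0 < r := Module.finrank_pos
  rw [← Finset.sum_fiberwise_of_maps_to (s := Finset.univ)
    (g := fun x : K => (minpoly F x, r / (minpoly F x).natDegree))
    (t := (monicIrreducibleFinset F n ×ˢ Finset.Icc 1 n).filter
        (fun p => p.2 * p.1.natDegree = r))]
  · refine Finset.sum_congr rfl fun p hp => ?_
    rw [Finset.mem_filter, Finset.mem_product, mem_monicIrreducibleFinset, Finset.mem_Icc] at hp
    obtain ⟨⟨⟨⟨hPm, -⟩, hPi⟩, -⟩, hpr⟩ := hp
    have hpd : r / p.1.natDegree = p.2 := by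
      rw [← hpr, Nat.mul_div_cancel _ hPi.natDegree_pos]
    have hfil : (Finset.univ.filter fun x : K =>
        (minpoly F x, r / (minpoly F x).natDegree) = p) =
        Finset.univ.filter fun x : K => minpoly F x = p.1 := by
      refine Finset.filter_congr fun x _ => ?_
      constructor
      · rintro rfl; rfl
      · intro h; ext1
        · exact h
        · simp only [h, hpd]
    rw [hfil, Finset.sum_congr rfl (g := fun _ => Λ p.1 ^ p.2)]
    · rw [Finset.sum_const, card_filter_minpoly_eq hPm hPi ⟨p.2, by rw [← hr, ← hpr, mul_comm]⟩,
        nsmul_eq_mul]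
    · intro x hx
      rw [(Finset.mem_filter.1 hx).2, hpd]
  · intro x _
    have hx : IsIntegral F x := .of_finite F x
    have hdvd : (minpoly F x).natDegree ∣ r := minpoly.degree_dvd hx
    have hle := Nat.le_of_dvd hr0 hdvd
    rw [Finset.mem_filter, Finset.mem_product, mem_monicIrreducibleFinset, Finset.mem_Icc]
    have hpos := minpoly.natDegree_pos hx
    refine ⟨⟨⟨⟨minpoly.monic hx, hle.trans hn⟩, minpoly.irreducible hx⟩,
      Nat.div_pos hle hpos, (Nat.div_le_self _ _).trans hn⟩, Nat.div_mul_cancel hdvd⟩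

end Extensions

section EvalCharacter

variable {F : Type*} [Field F]

/-- The multiplicative function `h ↦ ∏ a ∈ A, χ (h a) ^ e a` on polynomials. -/
noncomputable def evalCharacter (χ : MulChar F ℂ) (A : Finset F) (e : F → ℕ) : F[X] →* ℂ where
  toFun h := ∏ a ∈ A, χ (h.eval a) ^ e a
  map_one' := by simp
  map_mul' h₁ h₂ := by simp [mul_pow, Finset.prod_mul_distrib]

theorem evalCharacter_apply (χ : MulChar F ℂ) (A : Finset F) (e : F → ℕ) (h : F[X]) :
    evalCharacter χ A e h = ∏ a ∈ A, χ (h.eval a) ^ e a := rfl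

theorem sum_monicFinset_evalCharacter_eq_zero [Fintype F] (χ : MulChar F ℂ) {A : Finset F}
    {e : F → ℕ} {a₀ : F} (ha₀ : a₀ ∈ A) (hχ : ∑ y, χ y ^ e a₀ = 0) {n : ℕ} (hn : A.card ≤ n) :
    ∑ h ∈ monicFinset F n, evalCharacter χ A e h = 0 := by
  classical
  set w : F[X] := ∏ a ∈ A.erase a₀, (X - C a) with hw
  have hwdeg : w.natDegree < n := by
    rw [hw, natDegree_finsetProd_X_sub_C_eq_card, Finset.card_erase_of_mem ha₀]
    have := Finset.card_pos.2 ⟨a₀, ha₀⟩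
    omega
  have hw0 : w.eval a₀ ≠ 0 := by
    rw [hw, eval_prod, Finset.prod_ne_zero_iff]
    intro a ha
    simpa [sub_eq_zero] using (Finset.ne_of_mem_erase ha).symm
  have hwa : ∀ a ∈ A.erase a₀, w.eval a = 0 := by
    intro a ha
    rw [hw, eval_prod]
    exact Finset.prod_eq_zero ha (by simp)
  have hmem : ∀ (c : F) {h : F[X]}, h ∈ monicFinset F n → h + C c * w ∈ monicFinset F n := by
    intro c h hh
    rw [mem_monicFinset] at hh ⊢
    have hlt : (C c * w).degree < h.degree := by
      rw [degree_eq_natDegree hh.1.ne_zero, hh.2]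
      exact degree_le_natDegree.trans_lt
        (by exact_mod_cast (natDegree_C_mul_le c w).trans_lt hwdeg)
    refine ⟨hh.1.add_of_left hlt, ?_⟩
    rw [natDegree_add_eq_left_of_degree_lt hlt, hh.2]
  have hshift : ∀ c : F, ∑ h ∈ monicFinset F n, evalCharacter χ A e (h + C c * w) =
      ∑ h ∈ monicFinset F n, evalCharacter χ A e h := by
    intro c
    refine Finset.sum_bij' (fun h _ => h + C c * w) (fun h _ => h + C (-c) * w)
      (fun h hh => hmem c hh) (fun h hh => hmem (-c) hh) ?_ ?_ ?_
    · intro h _; simp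
    · intro h _; simp
    · intro h _; rfl
  have hzero : ∑ c : F, ∑ h ∈ monicFinset F n, evalCharacter χ A e (h + C c * w) = 0 := by
    rw [Finset.sum_comm]
    refine Finset.sum_eq_zero fun h _ => ?_
    have : ∀ c : F, evalCharacter χ A e (h + C c * w) =
        χ (h.eval a₀ + c * w.eval a₀) ^ e a₀ * ∏ a ∈ A.erase a₀, χ (h.eval a) ^ e a := by
      intro c
      rw [evalCharacter_apply, ← Finset.mul_prod_erase _ _ ha₀]
      congr 1
      · simp
      · refine Finset.prod_congr rfl fun a ha => ?_
        simp [hwa a ha]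
    simp_rw [this, ← Finset.sum_mul]
    have hb : ∑ c, χ (h.eval a₀ + c * w.eval a₀) ^ e a₀ = ∑ y, χ y ^ e a₀ :=
      ((Equiv.mulRight₀ _ hw0).trans (Equiv.addLeft (h.eval a₀))).sum_comp
        (fun y => χ y ^ e a₀)
    rw [hb, hχ, zero_mul]
  simp_rw [hshift, Finset.sum_const, nsmul_eq_mul] at hzero
  refine (mul_eq_zero.1 hzero).resolve_left ?_
  simp

theorem sum_monicFinset_zero [Finite F] (Λ : F[X] →* ℂ) : ∑ h ∈ monicFinset F 0, Λ h = 1 := by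
  have : monicFinset F 0 = {1} := by
    ext h
    rw [mem_monicFinset, Finset.mem_singleton]
    constructor
    · rintro ⟨h1, h2⟩
      exact h1.natDegree_eq_zero.1 h2
    · rintro rfl
      simp
  rw [this, Finset.sum_singleton, map_one]

end EvalCharacter

section CharacterSumExtension

variable {F K : Type*} [Field F] [Field K] [Fintype K] [Algebra F K]

theorem evalCharacter_minpoly_pow (χ : MulChar F ℂ) (A : Finset F) (e : F → ℕ) (x : K) :
    evalCharacter χ A e (minpoly F x) ^ (Module.finrank F K / (minpoly F x).natDegree) =
      ∏ a ∈ A, χ (Algebra.norm F (algebraMap F K a - x)) ^ e a := by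
  rw [evalCharacter_apply, ← Finset.prod_pow]
  refine Finset.prod_congr rfl fun a _ => ?_
  rw [norm_algebraMap_sub, map_pow, ← pow_mul, ← pow_mul, mul_comm]

theorem norm_sum_minpoly_evalCharacter_le [Fintype F] (χ : MulChar F ℂ) {ℓ : ℕ} (hℓ : ℓ.Prime)
    (hdvd : ℓ ∣ Fintype.card F - 1) (hχ : ∀ y ≠ 0, χ y ^ ℓ = 1)
    (hχ1 : ∀ y ≠ 0, χ y = 1 → y ^ ((Fintype.card F - 1) / ℓ) = 1)
    {A : Finset F} {e : F → ℕ} {a₀ : F} (ha₀ : a₀ ∈ A) (he₀ : e a₀ ≠ 0) (heℓ : e a₀ < ℓ)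
    {t : ℕ} (ht : Module.finrank F K = 2 * t) {D : ℕ} (hD : ∑ a ∈ A, e a = D) :
    ‖∑ x : K, evalCharacter χ A e (minpoly F x) ^
        (Module.finrank F K / (minpoly F x).natDegree)‖ ≤
      (2 * (4 * ℓ * (ℓ * D + 1) * (ℓ + 1) + 2 * (D + 1)) + D : ℝ) * (Fintype.card F : ℝ) ^ t := by
  classical
  have hcardK : Fintype.card K = (Fintype.card F ^ t) ^ 2 := by
    rw [Module.card_eq_pow_finrank (K := F), ht, ← pow_mul, mul_comm]
  have hdvdK : Fintype.card F - 1 ∣ Fintype.card K - 1 := by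
    rw [Module.card_eq_pow_finrank (K := F) (V := K)]
    simpa using Nat.sub_dvd_pow_sub_pow (Fintype.card F) 1 (Module.finrank F K)
  have hlin : ∀ b : F, C (algebraMap F K b) - X ≠ (0 : K[X]) := fun b h => by
    simpa using congrArg (fun p => coeff p 1) h
  have hdeg : ∀ b : F, (C (algebraMap F K b) - X : K[X]).natDegree = 1 := fun b => by
    rw [← natDegree_neg, neg_sub, natDegree_X_sub_C]
  set f : K[X] := ∏ a ∈ A, (C (algebraMap F K (a - a₀)) - X) ^ e a with hf
  have hf0 : f ≠ 0 := Finset.prod_ne_zero_iff.2 fun a _ => pow_ne_zero _ (hlin _)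
  have hfdeg : f.natDegree = D := by
    rw [hf, natDegree_prod _ _ fun a _ => pow_ne_zero _ (hlin _), ← hD]
    refine Finset.sum_congr rfl fun a _ => ?_
    rw [natDegree_pow, hdeg, mul_one]
  have hftr : f.natTrailingDegree = e a₀ := by
    have hg : (∏ a ∈ A.erase a₀, (C (algebraMap F K (a - a₀)) - X) ^ e a).coeff 0 ≠ 0 := by
      rw [coeff_zero_eq_eval_zero, eval_prod, Finset.prod_ne_zero_iff]
      intro a ha
      simpa [sub_eq_zero] using fun h => absurd h (Finset.ne_of_mem_erase ha)
    rw [hf, ← Finset.mul_prod_erase _ _ ha₀, natTrailingDegree_mul (pow_ne_zero _ (hlin _))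
      (fun h => hg (by rw [h, coeff_zero])), natTrailingDegree_eq_zero.2 (Or.inr hg),
      sub_self, map_zero, C_0, zero_sub, neg_pow, add_zero]
    have : ((-1 : K[X]) ^ e a₀) = C ((-1) ^ e a₀) := by simp
    rw [this, natTrailingDegree_mul (by simp) (by simp), natTrailingDegree_C,
      natTrailingDegree_X_pow, zero_add]
  set ψ : K →* ℂ := χ.toMonoidHom.comp (Algebra.norm F) with hψ
  have hψa : ∀ y, ψ y = χ (Algebra.norm F y) := fun _ => rfl
  have hnorm : ∀ y : K, y ≠ 0 → Algebra.norm F y ≠ 0 := fun y hy => by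
    rwa [Ne, Algebra.norm_eq_zero_iff]
  have hsum : ∑ x : K, evalCharacter χ A e (minpoly F x) ^
      (Module.finrank F K / (minpoly F x).natDegree) = ∑ x, ψ (f.eval x) := by
    simp_rw [evalCharacter_minpoly_pow]
    refine (Equiv.sum_comp (Equiv.addLeft (algebraMap F K a₀)) _).symm.trans ?_
    refine Finset.sum_congr rfl fun x _ => ?_
    rw [hf, eval_prod, map_prod]
    refine Finset.prod_congr rfl fun a _ => ?_
    rw [eval_pow, map_pow, hψa]
    simp [sub_sub]
  rw [hsum]
  have hmain := norm_sum_character_le ψ f hf0 (ℓ := ℓ) (m := (Fintype.card K - 1) / ℓ)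
    (s := Fintype.card F ^ t) (D := D) hℓ.one_lt
    (hftr ▸ (hℓ.coprime_iff_not_dvd.2 fun h =>
      absurd (Nat.le_of_dvd (Nat.pos_of_ne_zero he₀) h) (not_le.2 heℓ)))
    (by rw [Nat.mul_div_cancel' (hdvd.trans hdvdK)]
        exact Nat.sub_add_cancel Fintype.card_pos)
    hcardK hfdeg (by rw [hψa, Algebra.norm_zero, MulChar.map_zero])
    (fun y hy => hχ _ (hnorm y hy)) ?_
  · exact_mod_cast hmain
  · intro y hy h1
    have h2 := congrArg (algebraMap F K) (hχ1 _ (hnorm y hy) h1)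
    rw [map_pow, FiniteField.algebraMap_norm_eq_pow, map_one, ← pow_mul, Nat.card_eq_fintype_card,
      Nat.card_eq_fintype_card] at h2
    rwa [← Nat.mul_div_assoc _ hdvd, Nat.div_mul_cancel hdvdK] at h2

end CharacterSumExtension

section PowerSums

theorem exists_multiset_prod_one_sub (L : ℂ[X]) (hL : L.coeff 0 = 1) :
    ∃ α : Multiset ℂ, α.card = L.natDegree ∧ L = (α.map fun a => 1 - C a * X).prod := by
  have hL0 : L ≠ 0 := by rintro rfl; simp at hL
  have hsplit := IsAlgClosed.splits L
  have hz : ∀ z ∈ L.roots, z ≠ 0 := by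
    rintro z hz rfl
    rw [mem_roots hL0, IsRoot.def, ← coeff_zero_eq_eval_zero, hL] at hz
    exact one_ne_zero hz
  refine ⟨L.roots.map fun z => z⁻¹, ?_, ?_⟩
  · rw [Multiset.card_map, ← hsplit.natDegree_eq_card_roots]
  · have hfac := hsplit.eq_prod_roots
    have heval : L.leadingCoeff * (L.roots.map fun z => -z).prod = 1 := by
      have := congrArg (eval 0) hfac
      rw [← coeff_zero_eq_eval_zero, hL, eval_mul, eval_C, eval_multiset_prod,
        Multiset.map_map] at this
      simpa using this.symm
    have hmap : (L.roots.map fun z => z⁻¹).map (fun a => 1 - C a * X) =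
        L.roots.map (fun z => C (-z⁻¹) * (X - C z)) := by
      rw [Multiset.map_map]
      refine Multiset.map_congr rfl fun z h => ?_
      have : C z⁻¹ * C z = (1 : ℂ[X]) := by rw [← C_mul, inv_mul_cancel₀ (hz z h), C_1]
      simp only [Function.comp_apply, C_neg]
      linear_combination -this
    rw [hmap, Multiset.prod_map_mul]
    conv_lhs => rw [hfac]
    congr 1
    have hprod : (L.roots.map fun z => -z⁻¹).prod * (L.roots.map fun z => -z).prod = 1 := by
      rw [← Multiset.prod_map_mul]
      refine Multiset.prod_eq_one fun x hx => ?_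
      obtain ⟨z, h, rfl⟩ := Multiset.mem_map.1 hx
      simp [hz z h]
    have hlead : L.leadingCoeff = (L.roots.map fun z => -z⁻¹).prod :=
      mul_right_cancel₀ (right_ne_zero_of_mul_eq_one heval) (heval.trans hprod.symm)
    rw [hlead, map_multiset_prod, Multiset.map_map]
    rfl

theorem mk_powerSum_mul_prod (α : Multiset ℂ) :
    PowerSeries.mk (fun r => if r = 0 then 0 else -(α.map (· ^ r)).sum) *
        (((α.map fun a => 1 - C a * X).prod : ℂ[X]) : PowerSeries ℂ) =
      ((X * derivative (α.map fun a => 1 - C a * X).prod : ℂ[X]) : PowerSeries ℂ) := by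
  induction α using Multiset.induction with
  | empty =>
    have : (PowerSeries.mk fun r => if r = 0 then 0 else -((0 : Multiset ℂ).map (· ^ r)).sum) =
        (0 : PowerSeries ℂ) := by
      ext r; simp
    rw [this]; simp
  | cons a s ih =>
    set L : ℂ[X] := (s.map fun a => 1 - C a * X).prod
    have hgeom : (PowerSeries.mk fun r => if r = 0 then 0 else -a ^ r) *
        ((1 - C a * X : ℂ[X]) : PowerSeries ℂ) = ((-(C a * X) : ℂ[X]) : PowerSeries ℂ) := by
      ext r
      rw [coe_sub, coe_one, mul_sub, mul_one, coe_mul, coe_C, coe_X, ← mul_assoc,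
        mul_comm _ (PowerSeries.C a)]
      cases r with
      | zero => simp
      | succ r =>
        rw [map_sub, PowerSeries.coeff_succ_mul_X, PowerSeries.coeff_C_mul, PowerSeries.coeff_mk,
          PowerSeries.coeff_mk, coeff_coe, coeff_neg, coeff_C_mul, coeff_X]
        rcases eq_or_ne r 0 with rfl | hr
        · simp
        · rw [if_neg r.succ_ne_zero, if_neg hr, if_neg (by omega)]
          ring
    have hsplit : (PowerSeries.mk fun r => if r = 0 then 0 else -((a ::ₘ s).map (· ^ r)).sum) =
        (PowerSeries.mk fun r => if r = 0 then 0 else -a ^ r) +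
          PowerSeries.mk fun r => if r = 0 then 0 else -(s.map (· ^ r)).sum := by
      ext r
      rw [map_add, PowerSeries.coeff_mk, PowerSeries.coeff_mk, PowerSeries.coeff_mk]
      split_ifs
      · simp
      · rw [Multiset.map_cons, Multiset.sum_cons, neg_add]
    have hder : X * derivative ((1 - C a * X) * L) =
        -(C a * X) * L + (1 - C a * X) * (X * derivative L) := by
      simp only [derivative_mul, derivative_sub, derivative_one, derivative_C, derivative_X]
      ring
    rw [hsplit, Multiset.map_cons, Multiset.prod_cons, hder, coe_add, coe_mul _ L,
      coe_mul _ L, coe_mul _ (X * derivative L), ← ih, ← hgeom]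
    ring

theorem norm_le_of_norm_powerSum_le {β : Multiset ℂ} {B ρ : ℝ} (hρ : 0 < ρ)
    (h : ∀ t, 1 ≤ t → ‖(β.map (· ^ t)).sum‖ ≤ B * ρ ^ t) {b₀ : ℂ} (hb₀ : b₀ ∈ β) :
    ‖b₀‖ ≤ ρ := by
  classical
  set R : ℂ[X] := ∏ b ∈ β.toFinset.erase b₀, (X - C b) with hR
  have hR0 : R.eval b₀ ≠ 0 := by
    rw [hR, eval_prod, Finset.prod_ne_zero_iff]
    intro b hb
    simpa [sub_eq_zero] using (Finset.ne_of_mem_erase hb).symm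
  have hmul : (β.count b₀ : ℂ) ≠ 0 := by
    rw [Nat.cast_ne_zero, ← Nat.pos_iff_ne_zero]
    exact Multiset.count_pos.2 hb₀
  have hkey : ∀ t, ∑ j ∈ Finset.range (R.natDegree + 1),
      R.coeff j * (β.map (· ^ (t + j))).sum = β.count b₀ * (b₀ ^ t * R.eval b₀) := by
    intro t
    have h1 : ∀ j, (β.map (· ^ (t + j))).sum =
        ∑ b ∈ β.toFinset, (β.count b : ℂ) * b ^ (t + j) := by
      intro j
      rw [Finset.sum_multiset_map_count]
      simp
    simp_rw [h1, Finset.mul_sum]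
    rw [Finset.sum_comm, Finset.sum_eq_single_of_mem b₀ (Multiset.mem_toFinset.2 hb₀)]
    · rw [eval_eq_sum_range, Finset.mul_sum, Finset.mul_sum]
      exact Finset.sum_congr rfl fun j _ => by ring
    · intro b hb hne
      have hRb : R.eval b = 0 := by
        rw [hR, eval_prod]
        exact Finset.prod_eq_zero (Finset.mem_erase.2 ⟨hne, hb⟩) (by simp)
      rw [eval_eq_sum_range] at hRb
      calc _ = (β.count b : ℂ) * b ^ t *
            ∑ j ∈ Finset.range (R.natDegree + 1), R.coeff j * b ^ j := by
            rw [Finset.mul_sum]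
            exact Finset.sum_congr rfl fun j _ => by ring
        _ = 0 := by rw [hRb, mul_zero]
  set M : ℝ := ∑ j ∈ Finset.range (R.natDegree + 1), ‖R.coeff j‖ * (B * ρ ^ j)
  set c : ℝ := ‖(β.count b₀ : ℂ) * R.eval b₀‖
  have hc : 0 < c := norm_pos_iff.2 (mul_ne_zero hmul hR0)
  have hbound : ∀ t, 1 ≤ t → (‖b₀‖ / ρ) ^ t ≤ M / c := by
    intro t ht
    rw [div_pow, div_le_div_iff₀ (pow_pos hρ t) hc]
    calc ‖b₀‖ ^ t * c = ‖(β.count b₀ : ℂ) * (b₀ ^ t * R.eval b₀)‖ := by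
          rw [mul_left_comm, norm_mul, norm_pow]
      _ ≤ ∑ j ∈ Finset.range (R.natDegree + 1), ‖R.coeff j‖ * (B * ρ ^ (t + j)) := by
          rw [← hkey]
          refine (norm_sum_le _ _).trans (Finset.sum_le_sum fun j _ => ?_)
          rw [norm_mul]
          exact mul_le_mul_of_nonneg_left (h _ (by omega)) (norm_nonneg _)
      _ = M * ρ ^ t := by
          rw [Finset.sum_mul]
          exact Finset.sum_congr rfl fun j _ => by ring
  by_contra! hlt
  have h1 : 1 < ‖b₀‖ / ρ := (one_lt_div hρ).2 hlt
  obtain ⟨t, ht⟩ := pow_unbounded_of_one_lt (M / c) h1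
  have h2 := hbound (t + 1) (by omega)
  have h3 := pow_le_pow_right₀ h1.le (Nat.le_succ t)
  exact absurd (ht.trans_le (h3.trans h2)) (lt_irrefl _)

theorem norm_le_of_newton_identities {c S : ℕ → ℂ} {k : ℕ} (hc0 : c 0 = 1)
    (hc : ∀ n, k < n → c n = 0)
    (hS : ∀ n : ℕ, (n : ℂ) * c n = ∑ r ∈ Finset.Icc 1 n, S r * c (n - r)) {B ρ : ℝ} (hρ : 0 < ρ)
    (hB : ∀ t, 1 ≤ t → ‖S (2 * t)‖ ≤ B * ρ ^ t) : ‖S 1‖ ≤ k * √ρ := by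
  set L : ℂ[X] := ∑ n ∈ Finset.range (k + 1), C (c n) * X ^ n
  have hL : ∀ n, L.coeff n = c n := by
    intro n
    rw [finsetSum_coeff]
    simp_rw [coeff_C_mul_X_pow]
    rw [Finset.sum_ite_eq]
    split_ifs with h
    · rfl
    · exact (hc n (by simpa using h)).symm
  have hLdeg : L.natDegree ≤ k := natDegree_le_iff_coeff_eq_zero.2 fun n hn => by rw [hL, hc n hn]
  have hL0 : L ≠ 0 := fun h => by simpa [h, hc0] using hL 0
  obtain ⟨α, hα, hLα⟩ := exists_multiset_prod_one_sub L (by rw [hL, hc0])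
  have hser : (PowerSeries.mk fun r => if r = 0 then 0 else S r) * (L : PowerSeries ℂ) =
      ((X * derivative L : ℂ[X]) : PowerSeries ℂ) := by
    ext n
    rw [PowerSeries.coeff_mul, Finset.Nat.sum_antidiagonal_eq_sum_range_succ
      (fun i j => PowerSeries.coeff i (PowerSeries.mk fun r => if r = 0 then 0 else S r) *
        PowerSeries.coeff j (L : PowerSeries ℂ)), Finset.sum_range_succ']
    simp only [PowerSeries.coeff_mk, coeff_coe, hL, if_true, zero_mul, add_zero,
      Nat.succ_ne_zero, if_false]
    have h1 : (X * derivative L).coeff n = n * c n := by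
      cases n with
      | zero => simp
      | succ n => rw [coeff_X_mul, coeff_derivative, hL]; push_cast; ring
    rw [h1, hS, Finset.range_eq_Ico, Finset.sum_Ico_add' (fun r => S r * c (n - r)) 0 n 1, zero_add]
    rfl
  have hSα : ∀ r, r ≠ 0 → S r = -(α.map (· ^ r)).sum := by
    have hne : (L : PowerSeries ℂ) ≠ 0 := by rwa [Ne, coe_eq_zero_iff]
    have hmk := mk_powerSum_mul_prod α
    rw [← hLα, ← hser] at hmk
    intro r hr
    have := congrArg (PowerSeries.coeff r) (mul_right_cancel₀ hne hmk)
    simpa [hr] using this.symm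
  have hroot : ∀ a ∈ α, ‖a‖ ≤ √ρ := by
    intro a ha
    refine Real.le_sqrt_of_sq_le ?_
    rw [← norm_pow]
    refine norm_le_of_norm_powerSum_le (β := α.map (· ^ 2)) hρ (B := B) (fun t ht => ?_)
      (Multiset.mem_map_of_mem _ ha)
    rw [Multiset.map_map]
    have h1 := hB t ht
    rw [hSα _ (by omega), norm_neg] at h1
    simpa only [Function.comp_def, ← pow_mul] using h1
  rw [hSα 1 one_ne_zero, norm_neg]
  have hsum : ‖(α.map (· ^ 1)).sum‖ ≤ α.card * √ρ := by
    simp only [pow_one, Multiset.map_id']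
    refine (norm_multiset_sum_le _).trans ?_
    refine (Multiset.sum_le_card_nsmul _ (√ρ) ?_).trans_eq ?_
    · intro x hx
      obtain ⟨a, ha, rfl⟩ := Multiset.mem_map.1 hx
      exact hroot a ha
    · rw [Multiset.card_map, nsmul_eq_mul]
  refine hsum.trans (mul_le_mul_of_nonneg_right ?_ (Real.sqrt_nonneg _))
  rw [hα]
  exact_mod_cast hLdeg

end PowerSums

section CompleteCharacterSum

variable {F : Type*} [Field F] [Fintype F]

/-- Weil's bound for multiplicative character sums over products of linear factors. -/
theorem norm_sum_prod_mulChar_le (χ : MulChar F ℂ) {ℓ : ℕ} (hℓ : ℓ.Prime)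
    (hdvd : ℓ ∣ Fintype.card F - 1) (hχ : ∀ y ≠ 0, χ y ^ ℓ = 1)
    (hχ1 : ∀ y ≠ 0, χ y = 1 → y ^ ((Fintype.card F - 1) / ℓ) = 1)
    {A : Finset F} {e : F → ℕ} {a₀ : F} (ha₀ : a₀ ∈ A) (he₀ : e a₀ ≠ 0) (heℓ : e a₀ < ℓ)
    (hsum : ∑ y, χ y ^ e a₀ = 0) :
    ‖∑ x, ∏ a ∈ A, χ (a - x) ^ e a‖ ≤ (A.card - 1 : ℕ) * √(Fintype.card F) := by
  classical
  obtain ⟨p, hp⟩ := CharP.exists F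
  have hpp : Fact p.Prime := ⟨CharP.char_is_prime F p⟩
  set Λ := evalCharacter χ A e with hΛ
  set T : ℕ → ℕ → ℂ := fun n r =>
    ∑ P ∈ (monicIrreducibleFinset F n ×ˢ Finset.Icc 1 n).filter
      (fun P => P.2 * P.1.natDegree = r), (P.1.natDegree : ℂ) * Λ P.1 ^ P.2 with hT
  have hTF : T 1 1 = ∑ x, ∏ a ∈ A, χ (a - x) ^ e a := by
    have := sum_minpoly_pow (F := F) (K := F) Λ (n := 1) (by simp)
    simp_rw [hΛ, evalCharacter_minpoly_pow] at this
    simpa [hT] using this.symm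
  have hext : ∀ r, r ≠ 0 → ∀ n, r ≤ n → T n r = T r r := by
    intro r hr n hn
    have : NeZero r := ⟨hr⟩
    have hfr : Module.finrank F (FiniteField.Extension F p r) = r :=
      FiniteField.finrank_extension F p r
    have := Fintype.ofFinite (FiniteField.Extension F p r)
    have h1 := sum_minpoly_pow (K := FiniteField.Extension F p r) Λ (hfr.trans_le hn)
    have h2 := sum_minpoly_pow (K := FiniteField.Extension F p r) Λ (hfr.trans_le le_rfl)
    rw [hfr] at h1 h2
    exact h1.symm.trans h2
  rw [← hTF]
  have hq : (0 : ℝ) < Fintype.card F := by exact_mod_cast Fintype.card_pos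
  refine norm_le_of_newton_identities (c := fun n => ∑ h ∈ monicFinset F n, Λ h)
    (S := fun r => T r r) (sum_monicFinset_zero Λ) (fun n hn => ?_) (fun n => ?_) hq
    (B := 2 * (4 * ℓ * (ℓ * (∑ a ∈ A, e a : ℕ) + 1) * (ℓ + 1) + 2 * ((∑ a ∈ A, e a : ℕ) + 1)) +
      (∑ a ∈ A, e a : ℕ)) (fun t ht => ?_)
  · exact sum_monicFinset_evalCharacter_eq_zero χ ha₀ hsum (by omega)
  · refine nat_mul_sum_monicFinset Λ n (fun r => T r r) fun r hr => ?_
    rw [Finset.mem_Icc] at hr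
    exact (hext r (by omega) n hr.2).symm
  · have : NeZero (2 * t) := ⟨by omega⟩
    have hfr : Module.finrank F (FiniteField.Extension F p (2 * t)) = 2 * t :=
      FiniteField.finrank_extension F p (2 * t)
    have := Fintype.ofFinite (FiniteField.Extension F p (2 * t))
    have h2 := sum_minpoly_pow (K := FiniteField.Extension F p (2 * t)) Λ (hfr.trans_le le_rfl)
    have h3 := norm_sum_minpoly_evalCharacter_le (K := FiniteField.Extension F p (2 * t))
      χ hℓ hdvd hχ hχ1 ha₀ he₀ heℓ hfr rfl
    rw [h2, hfr] at h3
    exact h3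

end CompleteCharacterSum

section Covering

variable {F : Type*} [Field F] [Fintype F]

theorem exists_mulChar_prime_order {ℓ : ℕ} (hℓ : ℓ.Prime) (hdvd : ℓ ∣ Fintype.card F - 1) :
    ∃ χ : MulChar F ℂ, (∀ y ≠ 0, χ y ^ ℓ = 1) ∧
      (∀ y ≠ 0, χ y = 1 ↔ y ^ ((Fintype.card F - 1) / ℓ) = 1) ∧
      ∀ j, j ≠ 0 → j < ℓ → ∑ y, χ y ^ j = 0 := by
  classical
  obtain ⟨χ, hχ⟩ := MulChar.exists_mulChar_orderOf F hdvd
    (Complex.isPrimitiveRoot_exp ℓ hℓ.ne_zero)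
  obtain ⟨g, hg⟩ := IsCyclic.exists_zpow_surjective (G := Fˣ)
  have hcard : Fintype.card F - 1 = ℓ * ((Fintype.card F - 1) / ℓ) :=
    (Nat.mul_div_cancel' hdvd).symm
  have hm : (Fintype.card F - 1) / ℓ ≠ 0 := by
    intro h
    have := Fintype.one_lt_card (α := F)
    rw [h] at hcard
    omega
  have hgord : orderOf g = Fintype.card F - 1 := by
    rw [orderOf_eq_card_of_forall_mem_zpowers fun x => hg x, Nat.card_eq_fintype_card,
      Fintype.card_units]
  have hunit : ∀ y : F, y ≠ 0 → ∃ i : ℕ, y = (g : F) ^ i := by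
    intro y hy
    have hmem : Units.mk0 y hy ∈ Submonoid.powers g := by
      rw [mem_powers_iff_mem_zpowers]
      exact hg _
    obtain ⟨i, hi⟩ := hmem
    exact ⟨i, congrArg Units.val hi.symm⟩
  have hpow : ∀ y : F, y ≠ 0 → χ y ^ ℓ = 1 := by
    intro y hy
    rw [← MulChar.pow_apply' χ hℓ.ne_zero, ← hχ, pow_orderOf_eq_one,
      MulChar.one_apply hy.isUnit]
  have hχg : ∀ i, χ g ^ i = 1 → ℓ ∣ i := by
    intro i hi
    rw [← hχ, orderOf_dvd_iff_pow_eq_one]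
    ext u
    obtain ⟨j, hj⟩ := hunit u u.ne_zero
    rw [MulChar.one_apply_coe, MulChar.pow_apply_coe, hj, map_pow, ← pow_mul, mul_comm, pow_mul,
      hi, one_pow]
  refine ⟨χ, hpow, fun y hy => ?_, fun j hj hjℓ => ?_⟩
  · obtain ⟨i, rfl⟩ := hunit y hy
    rw [map_pow, ← pow_mul]
    constructor
    · intro h
      obtain ⟨u, rfl⟩ := hχg i h
      rw [mul_right_comm, ← hcard, pow_mul, FiniteField.pow_card_sub_one_eq_one _ g.ne_zero,
        one_pow]
    · intro h
      have h1 : orderOf g ∣ i * ((Fintype.card F - 1) / ℓ) := by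
        rw [orderOf_dvd_iff_pow_eq_one]
        ext
        simpa using h
      rw [hgord] at h1
      nth_rewrite 1 [hcard] at h1
      obtain ⟨u, rfl⟩ := Nat.dvd_of_mul_dvd_mul_right (Nat.pos_of_ne_zero hm) h1
      rw [pow_mul, hpow _ g.ne_zero, one_pow]
  · simp_rw [← MulChar.pow_apply' χ hj]
    refine MulChar.sum_eq_zero_of_ne_one fun h => ?_
    have := orderOf_dvd_of_pow_eq_one h
    rw [hχ] at this
    exact absurd (Nat.le_of_dvd (Nat.pos_of_ne_zero hj) this) (not_le.2 hjℓ)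

theorem card_le_of_forall_exists_mulChar_eq_one (χ : MulChar F ℂ) {ℓ : ℕ} (hℓ : ℓ.Prime)
    (hdvd : ℓ ∣ Fintype.card F - 1) (hχ : ∀ y ≠ 0, χ y ^ ℓ = 1)
    (hχ1 : ∀ y ≠ 0, χ y = 1 → y ^ ((Fintype.card F - 1) / ℓ) = 1)
    (hsum : ∀ j, j ≠ 0 → j < ℓ → ∑ y, χ y ^ j = 0) (A : Finset F)
    (hA : ∀ x, x ∈ A ∨ ∃ a ∈ A, χ (a - x) = 1) :
    (Fintype.card F : ℝ) ≤ 2 ^ A.card * (A.card - 1 : ℕ) * √(Fintype.card F) +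
      A.card * 2 ^ A.card := by
  classical
  obtain ⟨N, rfl⟩ : ∃ N, ℓ = N + 1 := ⟨ℓ - 1, (Nat.sub_add_cancel hℓ.one_le).symm⟩
  have hN : (0 : ℝ) < N := by
    have := hℓ.two_le
    exact_mod_cast (by omega : 0 < N)
  set w : ℕ → ℂ := fun j => if j = 0 then N else -1 with hw
  have hwnorm : ∑ j ∈ Finset.range (N + 1), ‖w j‖ = 2 * N := by
    rw [Finset.sum_range_succ']
    simp [hw]
    ring
  set U : F → ℂ := fun z => ∑ j ∈ Finset.range (N + 1), w j * χ z ^ j with hU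
  have hUzero : ∀ z, χ z = 1 → U z = 0 := by
    intro z hz
    simp only [hU, hz, one_pow, mul_one]
    rw [Finset.sum_range_succ']
    simp [hw]
  have hχnorm : ∀ z, ‖χ z‖ ≤ 1 := by
    intro z
    rcases eq_or_ne z 0 with rfl | hz
    · rw [MulChar.map_zero, norm_zero]
      exact zero_le_one
    · exact (Complex.norm_eq_one_of_pow_eq_one (hχ z hz) hℓ.ne_zero).le
  have hUnorm : ∀ z, ‖U z‖ ≤ 2 * N := by
    intro z
    rw [← hwnorm]
    refine (norm_sum_le _ _).trans (Finset.sum_le_sum fun j _ => ?_)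
    rw [norm_mul, norm_pow]
    exact mul_le_of_le_one_right (norm_nonneg _) (pow_le_one₀ (norm_nonneg _) (hχnorm z))
  have hupper : ‖∑ x, ∏ a ∈ A, U (a - x)‖ ≤ A.card * (2 * N : ℝ) ^ A.card := by
    have hsub : ∑ x, ∏ a ∈ A, U (a - x) = ∑ x ∈ A, ∏ a ∈ A, U (a - x) := by
      refine (Finset.sum_subset (Finset.subset_univ A) fun x _ hx => ?_).symm
      obtain ⟨a, ha, h⟩ := (hA x).resolve_left hx
      exact Finset.prod_eq_zero ha (hUzero _ h)
    rw [hsub, ← nsmul_eq_mul]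
    refine (norm_sum_le _ _).trans (Finset.sum_le_card_nsmul _ _ _ fun x _ => ?_)
    rw [norm_prod]
    exact (Finset.prod_le_prod (fun _ _ => norm_nonneg _) fun a _ => hUnorm _).trans_eq
      (Finset.prod_const _)
  set E : Finset (A → ℕ) := Fintype.piFinset fun _ => Finset.range (N + 1) with hE
  have hexp : ∑ x, ∏ a ∈ A, U (a - x) =
      ∑ e ∈ E, (∏ a, w (e a)) * ∑ x, ∏ a : A, χ (a - x) ^ e a := by
    simp_rw [Finset.mul_sum]
    rw [Finset.sum_comm]
    refine Finset.sum_congr rfl fun x _ => ?_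
    simp_rw [← Finset.prod_mul_distrib]
    rw [← Finset.prod_coe_sort]
    exact Finset.prod_univ_sum _ _
  have hterm : ∀ e ∈ E, e ≠ 0 → ‖∑ x, ∏ a : A, χ (a - x) ^ e a‖ ≤
      (A.card - 1 : ℕ) * √(Fintype.card F) := by
    intro e he he0
    obtain ⟨a₀, ha₀⟩ := Function.ne_iff.1 he0
    have hlt : e a₀ < N + 1 := Finset.mem_range.1 (Fintype.mem_piFinset.1 he a₀)
    set e' : F → ℕ := fun a => if h : a ∈ A then e ⟨a, h⟩ else 0 with he'
    have hee : ∀ a : A, e' a = e a := fun a => by simp [he']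
    have := norm_sum_prod_mulChar_le χ hℓ hdvd hχ hχ1 (A := A) (e := e') a₀.2
      (by rwa [hee]) (by rwa [hee]) (by rw [hee]; exact hsum _ ha₀ hlt)
    simp_rw [← hee]
    simpa only [← Finset.prod_coe_sort A] using this
  have hzero : (0 : A → ℕ) ∈ E := by simp [hE]
  rw [← Finset.add_sum_erase _ _ hzero] at hexp
  have hmain : (∏ a : A, w ((0 : A → ℕ) a)) * ∑ x : F, ∏ a : A, χ (a - x) ^ (0 : A → ℕ) a =
      (N : ℂ) ^ A.card * Fintype.card F := by
    simp [hw]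
  have hrest : ‖∑ e ∈ E.erase 0, (∏ a, w (e a)) * ∑ x, ∏ a : A, χ (a - x) ^ e a‖ ≤
      (2 * N : ℝ) ^ A.card * ((A.card - 1 : ℕ) * √(Fintype.card F)) := by
    have hwsum : (2 * N : ℝ) ^ A.card = ∑ e ∈ E, ∏ a, ‖w (e a)‖ := by
      have := Finset.prod_univ_sum (fun _ : A => Finset.range (N + 1)) fun _ j => ‖w j‖
      rwa [Finset.prod_const, hwnorm, Finset.card_univ, Fintype.card_coe] at this
    rw [hwsum, Finset.sum_mul]
    refine (norm_sum_le _ _).trans ((Finset.sum_le_sum fun e he => ?_).trans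
      (Finset.sum_le_sum_of_subset_of_nonneg (Finset.erase_subset 0 E) fun _ _ _ => by positivity))
    rw [norm_mul, norm_prod]
    exact mul_le_mul_of_nonneg_left
      (hterm e (Finset.mem_of_mem_erase he) (Finset.ne_of_mem_erase he)) (by positivity)
  have htotal : (N : ℝ) ^ A.card * Fintype.card F ≤ A.card * (2 * N : ℝ) ^ A.card +
      (2 * N : ℝ) ^ A.card * ((A.card - 1 : ℕ) * √(Fintype.card F)) := by
    have hnorm : (N : ℝ) ^ A.card * Fintype.card F = ‖(N : ℂ) ^ A.card * Fintype.card F‖ := by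
      simp
    rw [hmain] at hexp
    rw [hnorm, eq_sub_of_add_eq hexp.symm]
    exact (norm_sub_le _ _).trans (add_le_add hupper hrest)
  refine le_of_mul_le_mul_left (htotal.trans_eq ?_) (pow_pos hN A.card)
  rw [mul_pow]
  ring

end Covering

/-- Let `q` be a prime power and `A` a nonempty subset of the finite field with `q`
elements. If `q > (2^{|A|} · |A|)²`, then for every `n` with `1 < n < q` and
`(n-1) ∣ (q-1)`, not every element is the sum of an element of `A` and an `n`-potent. -/
theorem not_sum_of_elem_and_n_potent_of_large
    (q : ℕ) (hq : IsPrimePow q)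
    (F : Type*) [Field F] [Fintype F] [DecidableEq F] (hF : Fintype.card F = q)
    (A : Finset F) (hA : A.Nonempty) (hq' : (2 ^ A.card * A.card) ^ 2 < q) :
    ∀ n : ℕ, 1 < n → n < q → (n - 1) ∣ (q - 1) →
      ¬ (∀ γ : F, ∃ a ∈ A, ∃ b : F, b ^ n = b ∧ a + b = γ) := by
  classical
  rintro n hn hnq ⟨d, hd⟩ hcover
  subst hF
  have hd1 : d ≠ 1 := by
    rintro rfl
    omega
  have hℓ := Nat.minFac_prime hd1
  have hℓd := Nat.minFac_dvd d
  set ℓ := d.minFac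
  have hdvd : ℓ ∣ Fintype.card F - 1 := hd ▸ hℓd.mul_left _
  obtain ⟨χ, hχ, hχ1, hsum⟩ := exists_mulChar_prime_order hℓ hdvd
  have hcard : (A.image fun a => -a).card = A.card :=
    Finset.card_image_of_injective _ neg_injective
  have hle := card_le_of_forall_exists_mulChar_eq_one χ hℓ hdvd hχ (fun y hy => (hχ1 y hy).1) hsum
    (A.image fun a => -a) fun x => by
      obtain ⟨a, ha, b, hb, hab⟩ := hcover (-x)
      rcases eq_or_ne b 0 with rfl | hb0
      · left
        exact Finset.mem_image.2 ⟨a, ha, by linear_combination -hab⟩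
      · right
        refine ⟨-a, Finset.mem_image_of_mem _ ha, ?_⟩
        rw [show -a - x = b by linear_combination -hab, hχ1 b hb0, hd, Nat.mul_div_assoc _ hℓd,
          pow_mul]
        have hb1 : b ^ (n - 1) = 1 := by
          refine mul_right_cancel₀ hb0 ?_
          rw [← pow_succ, Nat.sub_add_cancel hn.le, hb, one_mul]
        rw [hb1, one_pow]
  rw [hcard, Nat.cast_sub (Finset.card_pos.2 hA), Nat.cast_one] at hle
  have hlt : (2 : ℝ) ^ A.card * A.card < √(Fintype.card F) :=
    Real.lt_sqrt_of_sq_lt (by exact_mod_cast hq')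
  set k : ℝ := (A.card : ℝ)
  set M : ℝ := 2 ^ A.card
  have hk : 1 ≤ k := Nat.one_le_cast.2 (Finset.card_pos.2 hA)
  have hM : 1 ≤ M := one_le_pow₀ one_le_two
  have hsq : √(Fintype.card F : ℝ) ^ 2 = Fintype.card F := Real.sq_sqrt (Nat.cast_nonneg _)
  set s : ℝ := √(Fintype.card F)
  have hs : 0 < s := lt_of_le_of_lt (by positivity) hlt
  nlinarith [mul_pos hs (sub_pos.2 hlt), mul_lt_mul_of_pos_left hlt (zero_lt_one.trans_le hM),
    mul_le_mul_of_nonneg_right hM (by positivity : 0 ≤ M * k)]
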